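/- arXiv:2403.00680 — 3 statements merged into one kernel-verified Lean document; each statement's English description precedes it below -/
import Mathlib

section
/- Let n, m ≥ 3 be integers and κ ≥ 4. There is an absolute constant C > 0 with the following property. Let β_1,…,β_n ∈ ℝ² and Y ∈ {−1,1}^{m×n}. For i ∈ [m] let X_{(i)} ∈ ℝ^{n×2} have rows x_j = −Y_{ij}·β_jᵀ, let X'_{(i)} consist of the rows with Y_{ij} = −1 and X''_{(i)} of the rows with Y_{ij} = 1. Let μ ≥ 1 and ε ∈ (0,1/4). Assume for each i that X'_{(i)} and X''_{(i)} are each μ-complex in both the ℓ₀ and ℓ₁ sense, and that ‖X'_{(i)}η‖₁ ≤ 2μ·‖X''_{(i)}η‖₁ and ‖X''_{(i)}η‖₁ ≤ 2μ·‖X'_{(i)}η‖₁ for all η ∈ ℝ². Set E = ln κ. Then there exists a nonnegative weight vector w ∈ ℝ^n whose support has size at most C·(1+E)·κ·(μ⁴·√n/ε³)·((log n)² + log m), such that for every i ∈ [m], every α ∈ ℝ² and every c ∈ [1/κ, 1/2): |∑_{j: Y_{ij}=−1} w_j·g_c(x_j·α) + ∑_{j: Y_{ij}=1} w_j·h_c(x_j·α)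 − L_i(α,c)| ≤ ε·L_i(α,c), where L_i(α,c) = ∑_{j: Y_{ij}=−1} g_c(x_j·α) + ∑_{j: Y_{ij}=1} h_c(x_j·α). -/
/-!
The weights come from independent sampling of `k` indices from one fixed distribution `p`, with
`w j = #{l | J l = j} / (k * p j)`; existence of a good sample follows from an exponential moment
bound and a union bound over finitely many events.

*Sampling distribution.* The complexity assumptions force `N α = ∑ |β j ⬝ᵥ α|` to be a norm on the
plane. Expanding `α` in an orthonormal basis whose first vector minimises `N` on the unit circle
gives `p` with `p j ≥ 1 / (4 n)` and `|β j ⬝ᵥ α| ≤ 4 * p j * N α`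
(`exists_sampling_distribution`).

*Reduction to halfspaces.* Both `h_c` and the pieces of `ln (1 + e^z) = z⁺ + a z + b z - ln 2`
(`log_one_add_exp_eq`) are monotone or antitone. By the layer cake formula
(`abs_sum_mul_le_of_superlevel`) the error of a weighted sum of such values is an integral of errors
over superlevel sets. For the bounded pieces these are the sets `β j ⬝ᵥ α ≥ τ`. For the unbounded
piece `z⁺`, divided by `p j`, they are the sets `β j ⬝ᵥ α ≥ t * p j`. All are traces of
homogeneous halfspaces of `ℝ³` on `n` points. Their VC dimension is at most `3`, so by Sauer-Shelah
there are at most `4 n³` of them (`card_halfspaceTraces_le`); `c` plays no role in the union bound.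

*Relative error.* With accuracy `δ` for all these sets the total error is at most
`4 δ N α + (3 + ln κ) δ n`. The ℓ₀ complexity gives `n ≤ 8 μ L_i`, and the ℓ₁ complexity with the
balance condition gives `N α ≤ 6 μ² L_i`. Hence `δ = ε / (48 μ² (1 + ln κ))` suffices, and `k` of
order `δ⁻² ((log n)² + log m)` is within the claimed size because `1 + ln κ ≤ κ`.
-/

open Finset Matrix

/-- `g_c(z) = ln(1+e^z) - ln(1-c)`. -/
noncomputable def gfun (c z : ℝ) : ℝ := Real.log (1 + Real.exp z) - Real.log (1 - c)

/-- `h_c(z) = -ln(c + (1-c)/(1+e^{-z}))`. -/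
noncomputable def hfun (c z : ℝ) : ℝ := -Real.log (c + (1 - c) / (1 + Real.exp (-z)))

/-- The submatrix of `x` with rows indexed by `s` is `μ`-complex in the ℓ₁ sense. -/
def Mu1ComplexOn {N d : ℕ} (x : Fin N → Fin d → ℝ) (s : Finset (Fin N)) (μ : ℝ) : Prop :=
  ∀ η : Fin d → ℝ,
    ∑ j ∈ s.filter (fun j => 0 ≤ x j ⬝ᵥ η), x j ⬝ᵥ η ≤
      μ * ∑ j ∈ s.filter (fun j => x j ⬝ᵥ η < 0), |x j ⬝ᵥ η|

/-- The submatrix of `x` with rows indexed by `s` is `μ`-complex in the ℓ₀ sense. -/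
def Mu0ComplexOn {N d : ℕ} (x : Fin N → Fin d → ℝ) (s : Finset (Fin N)) (μ : ℝ) : Prop :=
  ∀ η : Fin d → ℝ, η ≠ 0 →
    ((s.filter (fun j => 0 ≤ x j ⬝ᵥ η)).card : ℝ) ≤
      μ * ((s.filter (fun j => x j ⬝ᵥ η < 0)).card : ℝ)


/-! ### Layer cake -/

/-- If the signed weights `D` have mass at most `δ` in absolute value on every superlevel set of
`f`, with `0 ≤ f ≤ M`, then integrating over the level bounds `∑ D j * f j` by `M * δ`. -/
lemma abs_sum_mul_le_of_superlevel {ι : Type*} (s : Finset ι) (D f : ι → ℝ) (M δ : ℝ)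
    (hM : 0 ≤ M) (hf : ∀ j ∈ s, 0 ≤ f j ∧ f j ≤ M)
    (h : ∀ t, 0 < t → |∑ j ∈ s.filter (fun j => t ≤ f j), D j| ≤ δ) :
    |∑ j ∈ s, D j * f j| ≤ M * δ := by
  have hI : ∀ j ∈ s, ∫ t in (0 : ℝ)..M, Set.indicator {t | t ≤ f j} (fun _ => D j) t
      = D j * f j := by
    intro j hj
    rw [intervalIntegral.integral_indicator ⟨(hf j hj).1, (hf j hj).2⟩]
    simp [mul_comm]
  have hsum : ∑ j ∈ s, D j * f j
      = ∫ t in (0 : ℝ)..M, ∑ j ∈ s, Set.indicator {t | t ≤ f j} (fun _ => D j) t := by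
    rw [intervalIntegral.integral_finsetSum]
    · exact (Finset.sum_congr rfl hI).symm
    · intro j _
      rw [intervalIntegrable_iff, Set.uIoc_of_le hM]
      exact ((MeasureTheory.integrable_const _).indicator measurableSet_Iic)
  rw [hsum, ← Real.norm_eq_abs]
  refine (intervalIntegral.norm_integral_le_of_norm_le_const (C := δ) ?_).trans ?_
  · intro t ht
    rw [Set.uIoc_of_le hM] at ht
    have := h t ht.1
    rw [Finset.sum_filter] at this
    simpa [Set.indicator_apply, Real.norm_eq_abs] using this
  · rw [sub_zero, abs_of_nonneg hM, mul_comm]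

/-- On finitely many points, a superlevel set of a monotone function is given by a closed threshold. -/
lemma exists_threshold {ι : Type*} (s : Finset ι) (y : ι → ℝ) (φ : ℝ → ℝ) (hφ : Monotone φ)
    (t : ℝ) : ∃ τ : ℝ, ∀ j ∈ s, (t ≤ φ (y j) ↔ τ ≤ y j) := by
  by_cases hne : (s.filter fun j => t ≤ φ (y j)).Nonempty
  · obtain ⟨k, hk, hmin⟩ := Finset.exists_min_image _ y hne
    refine ⟨y k, fun j hj => ⟨fun h => hmin j (by simp [hj, h]), fun h => ?_⟩⟩
    exact (Finset.mem_filter.1 hk).2.trans (hφ h)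
  · obtain ⟨B, hB⟩ := (s.image y).bddAbove
    refine ⟨B + 1, fun j hj => ⟨fun h => (hne ⟨j, by simp [hj, h]⟩).elim, fun h => ?_⟩⟩
    have := hB (Finset.mem_coe.2 (Finset.mem_image_of_mem y hj))
    linarith

/-! ### Counting halfspace traces -/

/-- The subsets of the index set cut out of the points `a j` by closed homogeneous halfspaces. -/
noncomputable def halfspaceTraces {n d : ℕ} (a : Fin n → Fin d → ℝ) : Finset (Finset (Fin n)) :=
  Set.toFinite (Set.range fun v : Fin d → ℝ =>
    Finset.univ.filter fun j => 0 ≤ a j ⬝ᵥ v) |>.toFinset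

lemma mem_halfspaceTraces {n d : ℕ} (a : Fin n → Fin d → ℝ) (v : Fin d → ℝ) :
    (Finset.univ.filter fun j => 0 ≤ a j ⬝ᵥ v) ∈ halfspaceTraces a := by
  simp [halfspaceTraces]

/-- More than `d` vectors satisfy a linear relation with a negative coefficient, and no halfspace
contains exactly those with nonnegative coefficient: pairing the relation with its normal vector
would give a positive number. -/
lemma card_le_of_shatters {n d : ℕ} (a : Fin n → Fin d → ℝ) (s : Finset (Fin n))
    (hs : (halfspaceTraces a).Shatters s) : s.card ≤ d := by
  by_contra hcard
  have hdep : ¬ LinearIndependent ℝ (fun j : s => a j) := by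
    intro hli
    have := hli.fintype_card_le_finrank
    simp at this
    omega
  obtain ⟨g, hg, i, hi⟩ := Fintype.not_linearIndependent_iff.1 hdep
  -- Changing the sign of the relation if necessary, some coefficient is negative.
  obtain ⟨g, hg, i, hi⟩ : ∃ g : s → ℝ, ∑ j, g j • a j = 0 ∧ ∃ i, g i < 0 := by
    rcases lt_or_gt_of_ne hi with h | h
    · exact ⟨g, hg, i, h⟩
    · exact ⟨fun j => - g j, by simpa [Finset.sum_neg_distrib] using hg, i, by simpa using h⟩
  obtain ⟨u, hu, hus⟩ := hs (t := (univ.filter fun j : s => 0 ≤ g j).map (Function.Embedding.subtype _))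
    (by intro x hx; simp at hx; exact hx.1)
  obtain ⟨v, rfl⟩ : ∃ v : Fin d → ℝ, (Finset.univ.filter fun j => 0 ≤ a j ⬝ᵥ v) = u := by
    simpa [halfspaceTraces] using hu
  have hiff : ∀ j : s, 0 ≤ a j ⬝ᵥ v ↔ 0 ≤ g j := by
    intro j
    have := Finset.ext_iff.1 hus j
    simpa using this
  have hzero : ∑ j : s, g j * (a j ⬝ᵥ v) = 0 := by
    have := congrArg (fun z => z ⬝ᵥ v) hg
    simpa [sum_dotProduct, smul_dotProduct] using this
  have hpos : 0 < ∑ j : s, g j * (a j ⬝ᵥ v) := by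
    refine Finset.sum_pos' (fun j _ => ?_) ⟨i, mem_univ _, ?_⟩
    · by_cases h : 0 ≤ g j
      · exact mul_nonneg h ((hiff j).2 h)
      · have := mt (hiff j).1 h
        push Not at this h
        exact mul_nonneg_of_nonpos_of_nonpos h.le this.le
    · have := mt (hiff i).1 (not_le.2 hi)
      push Not at this
      exact mul_pos_of_neg_of_neg hi this
  linarith

lemma card_halfspaceTraces_le {n : ℕ} (hn : 1 ≤ n) (a : Fin n → Fin 3 → ℝ) :
    (halfspaceTraces a).card ≤ 4 * n ^ 3 := by
  have hvc : (halfspaceTraces a).vcDim ≤ 3 :=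
    Finset.sup_le fun s hs => card_le_of_shatters a s (Finset.mem_shatterer.1 hs)
  calc (halfspaceTraces a).card ≤ _ := Finset.card_le_card_shatterer _
    _ ≤ _ := Finset.card_shatterer_le_sum_vcDim
    _ ≤ ∑ k ∈ Iic 3, (Fintype.card (Fin n)).choose k :=
        Finset.sum_le_sum_of_subset (Finset.Iic_subset_Iic.2 hvc)
    _ ≤ ∑ k ∈ Iic 3, n ^ 3 := by
        refine Finset.sum_le_sum fun k hk => ?_
        rw [Fintype.card_fin]
        exact (Nat.choose_le_pow n k).trans (Nat.pow_le_pow_right hn (Finset.mem_Iic.1 hk))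
    _ = 4 * n ^ 3 := by simp

/-! ### Random sampling -/

/-- Subgaussian moment bound for a centred variable bounded by `K`, from `e^x ≤ 1 + x + x²`. -/
lemma sum_mul_exp_le {n : ℕ} (p X : Fin n → ℝ) (hp : ∀ j, 0 ≤ p j) (hp1 : ∑ j, p j = 1)
    (K : ℝ) (hX : ∀ j, |X j| ≤ K) (hX0 : ∑ j, p j * X j = 0) (t : ℝ) (ht : |t| * K ≤ 1) :
    ∑ j, p j * Real.exp (t * X j) ≤ Real.exp (t ^ 2 * K ^ 2) := by
  have h1 : ∀ j, Real.exp (t * X j) ≤ 1 + t * X j + t ^ 2 * K ^ 2 := by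
    intro j
    have hle : |t * X j| ≤ 1 := by
      rw [abs_mul]
      exact (mul_le_mul_of_nonneg_left (hX j) (abs_nonneg t)).trans ht
    have := (abs_le.1 (Real.abs_exp_sub_one_sub_id_le hle)).2
    have h2 : (X j) ^ 2 ≤ K ^ 2 := sq_le_sq' (by linarith [(abs_le.1 (hX j)).1]) (abs_le.1 (hX j)).2
    nlinarith [mul_le_mul_of_nonneg_left h2 (sq_nonneg t)]
  calc ∑ j, p j * Real.exp (t * X j) ≤ ∑ j, p j * (1 + t * X j + t ^ 2 * K ^ 2) :=
        Finset.sum_le_sum fun j _ => mul_le_mul_of_nonneg_left (h1 j) (hp j)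
    _ = (∑ j, p j) * (1 + t ^ 2 * K ^ 2) + t * ∑ j, p j * X j := by
        rw [Finset.sum_mul, Finset.mul_sum, ← Finset.sum_add_distrib]
        exact Finset.sum_congr rfl fun j _ => by ring
    _ = t ^ 2 * K ^ 2 + 1 := by rw [hp1, hX0]; ring
    _ ≤ _ := Real.add_one_le_exp _

/-- Chernoff and union bound in finite form: since the average over `J` (with product weights) of
`∑ e, exp (± t S_e)` is small, some sample `J` keeps every centred sum `S_e` below `k * δ`. -/
lemma exists_sample {n k : ℕ} {ι : Type*} [Fintype ι] (p : Fin n → ℝ) (hp : ∀ j, 0 ≤ p j)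
    (hp1 : ∑ j, p j = 1) (X : ι → Fin n → ℝ) (K : ℝ) (hK : 0 < K) (hX : ∀ e j, |X e j| ≤ K)
    (hX0 : ∀ e, ∑ j, p j * X e j = 0) (δ : ℝ) (hδ : 0 < δ) (hδK : δ ≤ K)
    (hk : Real.log (2 * Fintype.card ι) < k * (δ ^ 2 / (4 * K ^ 2))) :
    ∃ J : Fin k → Fin n, ∀ e, |∑ l, X e (J l)| ≤ k * δ := by
  -- This choice of `t` optimises the exponent `-t * (k * δ) + k * t ^ 2 * K ^ 2`.
  set t : ℝ := δ / (2 * K ^ 2) with ht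
  have ht0 : 0 < t := by positivity
  have htK : t * K ≤ 1 := by
    rw [ht, div_mul_eq_mul_div, div_le_one (by positivity)]
    nlinarith
  set P : (Fin k → Fin n) → ℝ := fun J => ∏ l, p (J l) with hP
  have hP0 : ∀ J, 0 ≤ P J := fun J => Finset.prod_nonneg fun l _ => hp _
  have hP1 : ∑ J, P J = 1 := by
    rw [hP, ← Fintype.sum_pow, hp1, one_pow]
  have hmgf : ∀ (e : ι) (r : ℝ), |r| = t →
      ∑ J, P J * Real.exp (r * ∑ l, X e (J l)) ≤ Real.exp (k * (t ^ 2 * K ^ 2)) := by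
    intro e r hr
    have h1 : ∑ J, P J * Real.exp (r * ∑ l, X e (J l))
        = (∑ j, p j * Real.exp (r * X e j)) ^ k := by
      rw [Fintype.sum_pow]
      refine Finset.sum_congr rfl fun J _ => ?_
      rw [Finset.prod_mul_distrib, Finset.mul_sum, Real.exp_sum]
    rw [h1, Real.exp_nat_mul]
    refine pow_le_pow_left₀ (Finset.sum_nonneg fun j _ => mul_nonneg (hp j) (Real.exp_nonneg _)) ?_ k
    rw [← hr, sq_abs]
    exact sum_mul_exp_le p (X e) hp hp1 K (hX e) (hX0 e) r (by rw [hr]; exact htK)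
  set Φ : (Fin k → Fin n) → ℝ := fun J =>
    ∑ e, (Real.exp (t * ∑ l, X e (J l)) + Real.exp (-t * ∑ l, X e (J l))) with hΦ
  have hmean : ∑ J, P J * Φ J ≤ 2 * Fintype.card ι * Real.exp (k * (t ^ 2 * K ^ 2)) := by
    simp only [hΦ, Finset.mul_sum, mul_add]
    rw [Finset.sum_comm]
    calc _ ≤ ∑ e : ι, 2 * Real.exp (k * (t ^ 2 * K ^ 2)) := by
          refine Finset.sum_le_sum fun e _ => ?_
          rw [Finset.sum_add_distrib]
          have h1 := hmgf e t (abs_of_pos ht0)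
          have h2 := hmgf e (-t) (by rw [abs_neg, abs_of_pos ht0])
          simp only [Finset.mul_sum] at h1 h2
          linarith
      _ = _ := by simp; ring
  -- Some sample does no worse than the average.
  obtain ⟨J, hJ⟩ : ∃ J, Φ J ≤ 2 * Fintype.card ι * Real.exp (k * (t ^ 2 * K ^ 2)) := by
    by_contra! hcon
    set B := 2 * Fintype.card ι * Real.exp (k * (t ^ 2 * K ^ 2)) with hB
    have hPpos : ∃ J, 0 < P J := by
      by_contra! hno
      have : ∑ J, P J ≤ 0 := Finset.sum_nonpos fun J _ => hno J
      linarith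
    obtain ⟨J0, hJ0⟩ := hPpos
    have : ∑ J, P J * B < ∑ J, P J * Φ J :=
      Finset.sum_lt_sum (fun J _ => mul_le_mul_of_nonneg_left (hcon J).le (hP0 J))
        ⟨J0, mem_univ _, mul_lt_mul_of_pos_left (hcon J0) hJ0⟩
    rw [← Finset.sum_mul, hP1, one_mul] at this
    linarith
  refine ⟨J, fun e => ?_⟩
  by_contra! hlt
  have hcard : (0 : ℝ) < 2 * Fintype.card ι := by
    have : Nonempty ι := ⟨e⟩
    have := Fintype.card_pos (α := ι)
    positivity
  set S := ∑ l, X e (J l) with hS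
  have h1 : Real.exp (t * |S|) ≤ Φ J := by
    refine le_trans ?_ (Finset.single_le_sum
      (f := fun e => Real.exp (t * ∑ l, X e (J l)) + Real.exp (-t * ∑ l, X e (J l)))
      (fun e _ => by positivity) (mem_univ e))
    rcases abs_cases S with ⟨h, _⟩ | ⟨h, _⟩
    · rw [h]; exact le_add_of_nonneg_right (Real.exp_nonneg _)
    · rw [h, mul_neg, ← neg_mul]; exact le_add_of_nonneg_left (Real.exp_nonneg _)
  have h2 := Real.log_le_log (Real.exp_pos _) (h1.trans hJ)
  rw [Real.log_exp, Real.log_mul hcard.ne' (Real.exp_ne_zero _), Real.log_exp] at h2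
  have h3 : t * (k * δ) ≤ t * |S| := mul_le_mul_of_nonneg_left hlt.le ht0.le
  have h4 : t * (k * δ) = 2 * (k * (δ ^ 2 / (4 * K ^ 2))) := by rw [ht]; field_simp; ring
  have h5 : k * (t ^ 2 * K ^ 2) = k * (δ ^ 2 / (4 * K ^ 2)) := by rw [ht]; field_simp; ring
  linarith

/-- Importance sampling from `p`: one sparse weight vector estimates the mass `∑ j ∈ A e, q e j` up
to `δ` for all `e` at once, provided each density `q e / p` is at most `K`. -/
lemma exists_weights {n k : ℕ} {ι : Type*} [Fintype ι] (p : Fin n → ℝ) (hp : ∀ j, 0 < p j)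
    (hp1 : ∑ j, p j = 1) (A : ι → Finset (Fin n)) (q : ι → Fin n → ℝ) (K : ℝ) (hK : 0 < K)
    (hq : ∀ e j, 0 ≤ q e j ∧ q e j ≤ K * p j) (δ : ℝ) (hδ : 0 < δ) (hδK : δ ≤ K) (hk0 : 0 < k)
    (hk : Real.log (2 * Fintype.card ι) < k * (δ ^ 2 / (4 * K ^ 2))) :
    ∃ w : Fin n → ℝ, (∀ j, 0 ≤ w j) ∧ (Finset.univ.filter fun j => w j ≠ 0).card ≤ k ∧
      ∀ e, |∑ j ∈ A e, (w j - 1) * q e j| ≤ δ := by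
  classical
  have hm0 : ∀ e, 0 ≤ ∑ j ∈ A e, q e j := fun e => Finset.sum_nonneg fun j _ => (hq e j).1
  have hmK : ∀ e, ∑ j ∈ A e, q e j ≤ K := by
    intro e
    calc ∑ j ∈ A e, q e j ≤ ∑ j, q e j :=
          Finset.sum_le_sum_of_subset_of_nonneg (subset_univ _) fun j _ _ => (hq e j).1
      _ ≤ ∑ j, K * p j := Finset.sum_le_sum fun j _ => (hq e j).2
      _ = K := by rw [← Finset.mul_sum, hp1, mul_one]
  obtain ⟨J, hJ⟩ := exists_sample (k := k) p (fun j => (hp j).le) hp1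
    (fun e j => (if j ∈ A e then q e j / p j else 0) - ∑ j ∈ A e, q e j) K hK
    (by
      intro e j
      have h1 : 0 ≤ (if j ∈ A e then q e j / p j else 0) ∧
          (if j ∈ A e then q e j / p j else 0) ≤ K := by
        split_ifs
        · exact ⟨div_nonneg (hq e j).1 (hp j).le, (div_le_iff₀ (hp j)).2 (hq e j).2⟩
        · exact ⟨le_rfl, hK.le⟩
      rw [abs_le]
      constructor <;> linarith [hm0 e, hmK e, h1.1, h1.2])
    (by
      intro e
      have : ∀ j, p j * (if j ∈ A e then q e j / p j else 0) = if j ∈ A e then q e j else 0 := by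
        intro j
        split_ifs
        · exact mul_div_cancel₀ _ (hp j).ne'
        · simp
      simp only [mul_sub, this, Finset.sum_sub_distrib, ← Finset.sum_mul, hp1]
      simp) δ hδ hδK hk
  have hkR : (0 : ℝ) < k := by exact_mod_cast hk0
  refine ⟨fun j => (∑ l, if J l = j then 1 else 0) / (k * p j), fun j => ?_, ?_, fun e => ?_⟩
  · exact div_nonneg (Finset.sum_nonneg fun l _ => by split_ifs <;> norm_num)
      (mul_nonneg hkR.le (hp j).le)
  · calc _ ≤ (univ.image J).card := by
          refine Finset.card_le_card fun j hj => ?_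
          by_contra hnot
          refine (Finset.mem_filter.1 hj).2 ?_
          beta_reduce
          rw [Finset.sum_eq_zero, zero_div]
          intro l _
          rw [if_neg]
          rintro rfl
          exact hnot (Finset.mem_image_of_mem _ (mem_univ l))
      _ ≤ k := by simpa using Finset.card_image_le (s := univ) (f := J)
  · have hw : ∑ j ∈ A e, (∑ l, if J l = j then (1 : ℝ) else 0) / (k * p j) * q e j
        = (∑ l, if J l ∈ A e then q e (J l) / p (J l) else 0) / k := by
      rw [Finset.sum_div]
      simp only [Finset.sum_div, Finset.sum_mul]
      rw [Finset.sum_comm]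
      refine Finset.sum_congr rfl fun l _ => ?_
      have : ∀ j, (if J l = j then (1 : ℝ) else 0) / (k * p j) * q e j
          = if J l = j then q e (J l) / p (J l) / k else 0 := by
        intro j
        split_ifs with h
        · subst h
          have := (hp (J l)).ne'
          field_simp
        · simp
      simp only [this, Finset.sum_ite_eq]
      split_ifs <;> simp
    have h := hJ e
    rw [Finset.sum_sub_distrib] at h
    simp only [Finset.sum_const, Finset.card_univ, Fintype.card_fin, nsmul_eq_mul] at h
    simp only [sub_mul, one_mul, Finset.sum_sub_distrib]
    rw [hw, div_sub' hkR.ne', abs_div, abs_of_pos hkR, div_le_iff₀ hkR, mul_comm δ]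
    exact h

/-! ### The sampling distribution -/

/-- A distribution dominating, up to the factor `4`, both the uniform one and the ℓ₁ sensitivities
of the points `β j`. -/
lemma exists_sampling_distribution {n : ℕ} (hn : 0 < n) (β : Fin n → Fin 2 → ℝ)
    (hβ : ∀ η : Fin 2 → ℝ, η ≠ 0 → ∃ j, β j ⬝ᵥ η ≠ 0) :
    ∃ p : Fin n → ℝ, (∀ j, 0 < p j) ∧ ∑ j, p j = 1 ∧ (∀ j, 1 / (n : ℝ) ≤ 4 * p j) ∧
      ∀ (α : Fin 2 → ℝ) (j : Fin n), |β j ⬝ᵥ α| ≤ 4 * p j * ∑ i, |β i ⬝ᵥ α| := by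
  set N : ℝ → ℝ → ℝ := fun x y => ∑ j, |β j 0 * x + β j 1 * y| with hN
  have hdot : ∀ j (α : Fin 2 → ℝ), β j ⬝ᵥ α = β j 0 * α 0 + β j 1 * α 1 := by
    intro j α; simp [dotProduct, Fin.sum_univ_two]
  have hNpos : ∀ x y, x ^ 2 + y ^ 2 = 1 → 0 < N x y := by
    intro x y hxy
    obtain ⟨j, hj⟩ := hβ ![x, y] (by
      intro h0
      have h1 := congrFun h0 0
      have h2 := congrFun h0 1
      simp at h1 h2
      simp [h1, h2] at hxy)
    rw [hdot] at hj
    simp at hj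
    exact Finset.sum_pos' (fun _ _ => abs_nonneg _) ⟨j, mem_univ _, abs_pos.2 hj⟩
  have hNsmul : ∀ r x y, N (r * x) (r * y) = |r| * N x y := by
    intro r x y
    simp only [hN, Finset.mul_sum]
    refine Finset.sum_congr rfl fun j _ => ?_
    rw [← abs_mul]; ring_nf
  have hNsub : ∀ x y x' y', N x y ≤ N (x + x') (y + y') + N x' y' := by
    intro x y x' y'
    simp only [hN, ← Finset.sum_add_distrib]
    refine Finset.sum_le_sum fun j _ => ?_
    have := abs_sub (β j 0 * (x + x') + β j 1 * (y + y')) (β j 0 * x' + β j 1 * y')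
    refine le_trans (le_of_eq ?_) this
    ring_nf
  set S : Set (ℝ × ℝ) := {z | z.1 ^ 2 + z.2 ^ 2 = 1} with hS
  have hScomp : IsCompact S := by
    refine (isCompact_Icc (a := ((-1, -1) : ℝ × ℝ)) (b := (1, 1))).of_isClosed_subset
      (isClosed_eq (by fun_prop) continuous_const) ?_
    rintro ⟨x, y⟩ hxy
    simp only [hS, Set.mem_ofPred_eq] at hxy
    refine ⟨⟨?_, ?_⟩, ⟨?_, ?_⟩⟩ <;> simp only <;> nlinarith [sq_nonneg x, sq_nonneg y]
  -- `(a, b)` minimises `N` on the unit circle, so `N` is at least `N a b` times the Euclidean norm.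
  obtain ⟨⟨a, b⟩, hab, hmin⟩ := hScomp.exists_isMinOn (f := fun z : ℝ × ℝ => N z.1 z.2)
    ⟨(1, 0), by simp [hS]⟩ (by
      apply Continuous.continuousOn
      simp only [hN]
      fun_prop)
  simp only [hS, Set.mem_ofPred_eq] at hab
  have hmin' : ∀ x y, x ^ 2 + y ^ 2 = 1 → N a b ≤ N x y := fun x y hxy => hmin (a := (x, y)) hxy
  have hpos1 : 0 < N a b := hNpos a b hab
  have hpos2 : 0 < N (-b) a := hNpos (-b) a (by linarith [hab, sq_nonneg a, neg_sq b])
  set s : Fin n → ℝ := fun j =>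
    |β j 0 * a + β j 1 * b| / N a b + 2 * (|β j 0 * (-b) + β j 1 * a| / N (-b) a) with hs
  have hs0 : ∀ j, 0 ≤ s j := fun j => by positivity
  have hssum : ∑ j, s j = 3 := by
    simp only [hs, Finset.sum_add_distrib, ← Finset.mul_sum, ← Finset.sum_div]
    have h1 : ∑ j, |β j 0 * a + β j 1 * b| = N a b := rfl
    have h2 : ∑ j, |β j 0 * (-b) + β j 1 * a| = N (-b) a := rfl
    rw [h1, h2, div_self hpos1.ne', div_self hpos2.ne']; norm_num
  have hnR : (0 : ℝ) < n := by exact_mod_cast hn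
  refine ⟨fun j => (1 / n + s j) / 4, fun j => ?_, ?_, fun j => ?_, fun α j => ?_⟩
  · have := hs0 j; positivity
  · rw [← Finset.sum_div, Finset.sum_add_distrib, hssum]
    simp [hnR.ne']; norm_num
  · have := hs0 j
    simp only; linarith
  · have hNα : ∑ i, |β i ⬝ᵥ α| = N (α 0) (α 1) := by simp only [hN, hdot]
    rw [hNα]
    -- Coordinates of `α` in the orthonormal basis `(a, b)`, `(-b, a)`.
    set u := α 0 * a + α 1 * b with hu
    set v := α 1 * a - α 0 * b with hv
    have e0 : α 0 = u * a + v * (-b) := by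
      rw [hu, hv]; linear_combination (-α 0) * hab
    have e1 : α 1 = u * b + v * a := by
      rw [hu, hv]; linear_combination (-α 1) * hab
    have hNnn : 0 ≤ N (α 0) (α 1) := Finset.sum_nonneg fun _ _ => abs_nonneg _
    have hbu : |u| * N a b ≤ N (α 0) (α 1) := by
      set r := Real.sqrt (α 0 ^ 2 + α 1 ^ 2) with hr
      have hr2 : r ^ 2 = α 0 ^ 2 + α 1 ^ 2 := Real.sq_sqrt (by positivity)
      have hr0 : 0 ≤ r := Real.sqrt_nonneg _
      have hur : |u| ≤ r := by
        refine abs_le_of_sq_le_sq ?_ hr0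
        have : u ^ 2 + v ^ 2 = r ^ 2 := by
          rw [hr2, hu, hv]; linear_combination (α 0 ^ 2 + α 1 ^ 2) * hab
        nlinarith [sq_nonneg v]
      rcases hr0.eq_or_lt with h | h
      · rw [← h] at hur
        have : |u| = 0 := le_antisymm hur (abs_nonneg _)
        rw [this, zero_mul]; exact hNnn
      · have h1 := hmin' (α 0 / r) (α 1 / r) (by
          rw [div_pow, div_pow, ← add_div, ← hr2, div_self (by positivity)])
        have h2 := hNsmul r (α 0 / r) (α 1 / r)
        rw [mul_div_cancel₀ _ h.ne', mul_div_cancel₀ _ h.ne', abs_of_pos h] at h2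
        rw [h2]
        exact mul_le_mul hur h1 hpos1.le hr0
    have hbv : |v| * N (-b) a ≤ 2 * N (α 0) (α 1) := by
      have h1 := hNsub (v * (-b)) (v * a) (u * a) (u * b)
      rw [hNsmul, hNsmul, add_comm (v * -b), add_comm (v * a), ← e0, ← e1] at h1
      linarith
    have key : |β j ⬝ᵥ α| ≤ s j * N (α 0) (α 1) := by
      calc |β j ⬝ᵥ α| = |u * (β j 0 * a + β j 1 * b) + v * (β j 0 * (-b) + β j 1 * a)| := by
            rw [hdot]; congr 1; linear_combination β j 0 * e0 + β j 1 * e1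
        _ ≤ |u| * |β j 0 * a + β j 1 * b| + |v| * |β j 0 * (-b) + β j 1 * a| := by
            rw [← abs_mul, ← abs_mul]; exact abs_add_le _ _
        _ = |u| * N a b * (|β j 0 * a + β j 1 * b| / N a b)
            + |v| * N (-b) a * (|β j 0 * (-b) + β j 1 * a| / N (-b) a) := by
            field_simp
        _ ≤ N (α 0) (α 1) * (|β j 0 * a + β j 1 * b| / N a b)
            + 2 * N (α 0) (α 1) * (|β j 0 * (-b) + β j 1 * a| / N (-b) a) := by
            gcongr
        _ = s j * N (α 0) (α 1) := by rw [hs]; ring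
    refine key.trans (mul_le_mul_of_nonneg_right ?_ hNnn)
    have : 0 ≤ 1 / (n : ℝ) := by positivity
    linarith

/-! ### The loss functions -/

/-- The softplus function as its positive part plus bounded monotone and antitone corrections. -/
lemma log_one_add_exp_eq (z : ℝ) : Real.log (1 + Real.exp z) =
    max z 0 + Real.log (1 + Real.exp (min z 0)) + Real.log (1 + Real.exp (-max z 0))
      - Real.log 2 := by
  rcases le_total z 0 with h | h
  · rw [max_eq_right h, min_eq_left h]; norm_num
  · rw [max_eq_left h, min_eq_right h]
    have : 1 + Real.exp z = Real.exp z * (1 + Real.exp (-z)) := by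
      rw [mul_add, ← Real.exp_add]; simp; ring
    rw [this, Real.log_mul (Real.exp_ne_zero _) (by positivity), Real.log_exp]
    norm_num; ring

lemma log_one_add_exp_mem {z : ℝ} (hz : z ≤ 0) :
    0 ≤ Real.log (1 + Real.exp z) ∧ Real.log (1 + Real.exp z) ≤ Real.log 2 := by
  refine ⟨Real.log_nonneg (by linarith [Real.exp_pos z]), Real.log_le_log (by positivity) ?_⟩
  linarith [Real.exp_le_one_iff.2 hz]

lemma max_le_gfun {c : ℝ} (hc0 : 0 < c) (hc : c < 1 / 2) (z : ℝ) : max z 0 ≤ gfun c z := by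
  have h1 : Real.log (1 - c) ≤ 0 := Real.log_nonpos (by linarith) (by linarith)
  have h2 : max z 0 ≤ Real.log (1 + Real.exp z) := by
    refine max_le ?_ (Real.log_nonneg (by linarith [Real.exp_pos z]))
    rw [Real.le_log_iff_exp_le (by positivity)]; linarith
  unfold gfun; linarith

lemma one_fourth_le_gfun {c : ℝ} (hc0 : 0 < c) (hc : c < 1 / 2) {z : ℝ} (hz : 0 ≤ z) :
    1 / 4 ≤ gfun c z := by
  have h1 : Real.log (1 - c) ≤ 0 := Real.log_nonpos (by linarith) (by linarith)
  have h2 : Real.log 2 ≤ Real.log (1 + Real.exp z) :=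
    Real.log_le_log (by norm_num) (by linarith [Real.one_le_exp hz])
  have := Real.log_two_gt_d9
  unfold gfun; linarith

lemma hfun_arg {c : ℝ} (hc0 : 0 < c) (hc : c < 1 / 2) (z : ℝ) :
    c ≤ c + (1 - c) / (1 + Real.exp (-z)) ∧ c + (1 - c) / (1 + Real.exp (-z)) ≤ 1 := by
  have he := Real.exp_pos (-z)
  constructor
  · have : 0 ≤ (1 - c) / (1 + Real.exp (-z)) := div_nonneg (by linarith) (by linarith)
    linarith
  · have : (1 - c) / (1 + Real.exp (-z)) ≤ 1 - c := div_le_self (by linarith) (by linarith)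
    linarith

lemma hfun_antitone {c : ℝ} (hc0 : 0 < c) (hc : c < 1 / 2) : Antitone (hfun c) := by
  intro z z' h
  have h1 := (hfun_arg hc0 hc z).1
  unfold hfun
  refine neg_le_neg (Real.log_le_log (by linarith) ?_)
  have : 0 < Real.exp (-z') := Real.exp_pos _
  have : 0 ≤ 1 - c := by linarith
  gcongr

lemma hfun_mem {c κ : ℝ} (hκ : 0 < κ) (hc0 : 1 / κ ≤ c) (hc : c < 1 / 2) (z : ℝ) :
    0 ≤ hfun c z ∧ hfun c z ≤ Real.log κ := by
  have hcp : 0 < c := lt_of_lt_of_le (by positivity) hc0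
  obtain ⟨h1, h2⟩ := hfun_arg hcp hc z
  unfold hfun
  constructor
  · have := Real.log_nonpos (by linarith) h2
    linarith
  · have h3 := Real.log_le_log (by positivity) (hc0.trans h1)
    rw [one_div, Real.log_inv] at h3
    linarith

lemma one_fourth_le_hfun {c : ℝ} (hc0 : 0 < c) (hc : c < 1 / 2) {z : ℝ} (hz : z ≤ 0) :
    1 / 4 ≤ hfun c z := by
  refine le_trans ?_ (hfun_antitone hc0 hc hz)
  have h1 : Real.log (c + (1 - c) / (1 + Real.exp (-0))) ≤ Real.log (3 / 4) := by
    refine Real.log_le_log (lt_of_lt_of_le hc0 (hfun_arg hc0 hc 0).1) ?_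
    norm_num; linarith
  have h2 : Real.log (3 / 4) ≤ 3 / 4 - 1 := Real.log_le_sub_one_of_pos (by norm_num)
  unfold hfun; linarith

/-! ### Lower bounds on the objective -/

lemma card_le_of_mu0 {N d : ℕ} {x : Fin N → Fin d → ℝ} {s : Finset (Fin N)} {μ : ℝ} (hμ : 1 ≤ μ)
    (h : Mu0ComplexOn x s μ) (α : Fin d → ℝ) :
    (s.card : ℝ) ≤ (1 + μ) * (s.filter (fun j => x j ⬝ᵥ α ≤ 0)).card := by
  by_cases hα : α = 0
  · subst hα
    simp only [dotProduct_zero, le_refl, Finset.filter_true]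
    nlinarith [(Nat.cast_nonneg s.card : (0 : ℝ) ≤ s.card)]
  · have h1 := h α hα
    have h2 := Finset.card_filter_add_card_filter_not (s := s) (fun j => 0 ≤ x j ⬝ᵥ α)
    simp only [not_le] at h2
    have h3 : ((s.filter fun j => 0 ≤ x j ⬝ᵥ α).card : ℝ) + (s.filter fun j => x j ⬝ᵥ α < 0).card
        = s.card := by exact_mod_cast h2
    have h4 : ((s.filter fun j => x j ⬝ᵥ α < 0).card : ℝ)
        ≤ (s.filter fun j => x j ⬝ᵥ α ≤ 0).card := by
      exact_mod_cast Finset.card_le_card (Finset.monotone_filter_right s fun j _ hj => le_of_lt hj)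
    nlinarith

lemma card_le_sum_hfun {N d : ℕ} {x : Fin N → Fin d → ℝ} {s : Finset (Fin N)} {μ c κ : ℝ}
    (hμ : 1 ≤ μ) (hκ : 0 < κ) (hc0 : 1 / κ ≤ c) (hc : c < 1 / 2) (h : Mu0ComplexOn x s μ)
    (α : Fin d → ℝ) : (s.card : ℝ) ≤ 4 * (1 + μ) * ∑ j ∈ s, hfun c (x j ⬝ᵥ α) := by
  have hcp : 0 < c := lt_of_lt_of_le (by positivity) hc0
  have h1 : ((s.filter fun j => x j ⬝ᵥ α ≤ 0).card : ℝ) * (1 / 4) ≤ ∑ j ∈ s, hfun c (x j ⬝ᵥ α) := by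
    rw [← nsmul_eq_mul]
    refine (Finset.card_nsmul_le_sum _ _ _ fun j hj =>
      one_fourth_le_hfun hcp hc (Finset.mem_filter.1 hj).2).trans ?_
    exact Finset.sum_le_sum_of_subset_of_nonneg (Finset.filter_subset _ _)
      fun j _ _ => (hfun_mem hκ hc0 hc _).1
  nlinarith [card_le_of_mu0 hμ h α]

lemma card_le_sum_gfun {N d : ℕ} {x : Fin N → Fin d → ℝ} {s : Finset (Fin N)} {μ c : ℝ}
    (hμ : 1 ≤ μ) (hc0 : 0 < c) (hc : c < 1 / 2) (h : Mu0ComplexOn x s μ)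
    (α : Fin d → ℝ) : (s.card : ℝ) ≤ 4 * (1 + μ) * ∑ j ∈ s, gfun c (x j ⬝ᵥ α) := by
  have h0 := card_le_of_mu0 hμ h (-α)
  simp only [dotProduct_neg, Left.neg_nonpos_iff] at h0
  have h1 : ((s.filter fun j => 0 ≤ x j ⬝ᵥ α).card : ℝ) * (1 / 4) ≤ ∑ j ∈ s, gfun c (x j ⬝ᵥ α) := by
    rw [← nsmul_eq_mul]
    refine (Finset.card_nsmul_le_sum _ _ _ fun j hj =>
      one_fourth_le_gfun hc0 hc (Finset.mem_filter.1 hj).2).trans ?_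
    exact Finset.sum_le_sum_of_subset_of_nonneg (Finset.filter_subset _ _)
      fun j _ _ => (le_max_right _ _).trans (max_le_gfun hc0 hc _)
  nlinarith

lemma sum_abs_le_sum_gfun {N d : ℕ} {x : Fin N → Fin d → ℝ} {s : Finset (Fin N)} {μ c : ℝ}
    (hμ : 1 ≤ μ) (hc0 : 0 < c) (hc : c < 1 / 2) (h : Mu1ComplexOn x s μ)
    (α : Fin d → ℝ) : ∑ j ∈ s, |x j ⬝ᵥ α| ≤ (1 + μ) * ∑ j ∈ s, gfun c (x j ⬝ᵥ α) := by
  have h0 := h (-α)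
  simp only [dotProduct_neg, Left.nonneg_neg_iff, Left.neg_neg_iff, abs_neg] at h0
  have h1 : ∑ j ∈ s.filter (fun j => 0 < x j ⬝ᵥ α), |x j ⬝ᵥ α| ≤ ∑ j ∈ s, gfun c (x j ⬝ᵥ α) := by
    refine (Finset.sum_le_sum fun j hj => ?_).trans (Finset.sum_le_sum_of_subset_of_nonneg
      (Finset.filter_subset (fun j => 0 < x j ⬝ᵥ α) s)
      fun j _ _ => (le_max_right _ _).trans (max_le_gfun hc0 hc _))
    rw [abs_of_pos (Finset.mem_filter.1 hj).2]
    exact (le_max_left _ _).trans (max_le_gfun hc0 hc _)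
  have h2 : ∑ j ∈ s, |x j ⬝ᵥ α| = ∑ j ∈ s.filter (fun j => x j ⬝ᵥ α ≤ 0), -(x j ⬝ᵥ α)
      + ∑ j ∈ s.filter (fun j => 0 < x j ⬝ᵥ α), |x j ⬝ᵥ α| := by
    rw [← Finset.sum_filter_add_sum_filter_not s (fun j => x j ⬝ᵥ α ≤ 0)]
    simp only [not_le]
    congr 1
    exact Finset.sum_congr rfl fun j hj => abs_of_nonpos (Finset.mem_filter.1 hj).2
  rw [h2]
  nlinarith

/-! ### Error bounds from halfspace accuracy -/

lemma abs_sum_monotone_le {n d : ℕ} {β : Fin n → Fin d → ℝ} {s : Finset (Fin n)} {D : Fin n → ℝ}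
    {Δ M : ℝ} (hM : 0 ≤ M)
    (hD : ∀ (α : Fin d → ℝ) (τ : ℝ), |∑ j ∈ s.filter (fun j => τ ≤ β j ⬝ᵥ α), D j| ≤ Δ)
    {φ : ℝ → ℝ} (hφ : Monotone φ) (hφM : ∀ z, 0 ≤ φ z ∧ φ z ≤ M) (α : Fin d → ℝ) :
    |∑ j ∈ s, D j * φ (β j ⬝ᵥ α)| ≤ M * Δ := by
  refine abs_sum_mul_le_of_superlevel s D _ M Δ hM (fun j _ => hφM _) fun t _ => ?_
  obtain ⟨τ, hτ⟩ := exists_threshold s (fun j => β j ⬝ᵥ α) φ hφ t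
  rw [Finset.filter_congr hτ]
  exact hD α τ

/-- The part `z⁺` of `gfun` contributes `4 * N * δ`, through the weights `D j * p j` and the values
`z⁺ / p j ≤ 4 * N`; the three bounded parts contribute `Δ` each. -/
lemma abs_sum_gfun_le {n d : ℕ} {β : Fin n → Fin d → ℝ} {s : Finset (Fin n)} {D p : Fin n → ℝ}
    (hp : ∀ j, 0 < p j) {Δ δ c : ℝ}
    (hD : ∀ (α : Fin d → ℝ) (τ : ℝ), |∑ j ∈ s.filter (fun j => τ ≤ β j ⬝ᵥ α), D j| ≤ Δ)
    (hDp : ∀ (α : Fin d → ℝ) (t : ℝ),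
      |∑ j ∈ s.filter (fun j => t * p j ≤ β j ⬝ᵥ α), D j * p j| ≤ δ)
    (hc0 : 0 < c) (hc : c < 1 / 2) (α : Fin d → ℝ) (N : ℝ) (hN0 : 0 ≤ N)
    (hN : ∀ j, |β j ⬝ᵥ α| ≤ 4 * p j * N) :
    |∑ j ∈ s, D j * gfun c (β j ⬝ᵥ α)| ≤ 4 * N * δ + 3 * Δ := by
  have hΔ : 0 ≤ Δ := (abs_nonneg _).trans (hD 0 0)
  have hlog2 : Real.log 2 ≤ 1 := by linarith [Real.log_two_lt_d9]
  have hlog2' : 0 ≤ Real.log 2 := Real.log_nonneg (by norm_num)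
  have h1 : |∑ j ∈ s, D j * max (β j ⬝ᵥ α) 0| ≤ 4 * N * δ := by
    have := abs_sum_mul_le_of_superlevel s (fun j => D j * p j)
      (fun j => max (β j ⬝ᵥ α) 0 / p j) (4 * N) δ (by positivity)
      (fun j _ => ⟨div_nonneg (le_max_right _ _) (hp j).le, by
        rw [div_le_iff₀ (hp j)]
        have h := hN j
        have h0 := hp j
        refine max_le ?_ (by positivity)
        linarith [le_abs_self (β j ⬝ᵥ α)]⟩)
      (fun t ht => by
        have : ∀ j ∈ s, (t ≤ max (β j ⬝ᵥ α) 0 / p j ↔ t * p j ≤ β j ⬝ᵥ α) := by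
          intro j _
          rw [le_div_iff₀ (hp j), le_max_iff, or_iff_left]
          exact not_le.2 (mul_pos ht (hp j))
        rw [Finset.filter_congr this]
        exact hDp α t)
    refine le_trans (le_of_eq ?_) this
    congr 1
    refine Finset.sum_congr rfl fun j _ => ?_
    have := (hp j).ne'
    field_simp
  have h2 : |∑ j ∈ s, D j * Real.log (1 + Real.exp (min (β j ⬝ᵥ α) 0))| ≤ Real.log 2 * Δ := by
    refine abs_sum_monotone_le (φ := fun z => Real.log (1 + Real.exp (min z 0))) hlog2' hD ?_
      (fun z => log_one_add_exp_mem (min_le_right _ _)) α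
    intro z z' h
    refine Real.log_le_log (by positivity) ?_
    have := Real.exp_le_exp.2 (min_le_min_right 0 h)
    linarith
  have h3 : |∑ j ∈ s, D j * Real.log (1 + Real.exp (-max (β j ⬝ᵥ α) 0))| ≤ Real.log 2 * Δ := by
    have := abs_sum_monotone_le (φ := fun z => Real.log (1 + Real.exp (-max (-z) 0))) hlog2' hD ?_
      (fun z => log_one_add_exp_mem (by simp)) (-α)
    · simpa only [dotProduct_neg, neg_neg] using this
    · intro z z' h
      refine Real.log_le_log (by positivity) ?_
      have := Real.exp_le_exp.2 (neg_le_neg (max_le_max_right 0 (neg_le_neg h)))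
      linarith
  have h4 : |∑ j ∈ s, D j * (Real.log 2 + Real.log (1 - c))| ≤ Real.log 2 * Δ := by
    refine abs_sum_monotone_le (φ := fun _ => Real.log 2 + Real.log (1 - c)) hlog2' hD
      monotone_const (fun _ => ⟨?_, ?_⟩) α
    · rw [← Real.log_mul (by norm_num) (by linarith)]
      exact Real.log_nonneg (by linarith)
    · linarith [Real.log_nonpos (x := 1 - c) (by linarith) (by linarith)]
  have hsplit : ∑ j ∈ s, D j * gfun c (β j ⬝ᵥ α) = ∑ j ∈ s, D j * max (β j ⬝ᵥ α) 0
      + ∑ j ∈ s, D j * Real.log (1 + Real.exp (min (β j ⬝ᵥ α) 0))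
      + ∑ j ∈ s, D j * Real.log (1 + Real.exp (-max (β j ⬝ᵥ α) 0))
      - ∑ j ∈ s, D j * (Real.log 2 + Real.log (1 - c)) := by
    rw [← Finset.sum_add_distrib, ← Finset.sum_add_distrib, ← Finset.sum_sub_distrib]
    refine Finset.sum_congr rfl fun j _ => ?_
    rw [gfun, log_one_add_exp_eq]; ring
  have h5 : Real.log 2 * Δ ≤ Δ := mul_le_of_le_one_left hΔ hlog2
  rw [hsplit]
  rw [abs_le] at h1 h2 h3 h4 ⊢
  constructor <;> linarith

lemma abs_sum_hfun_le {n d : ℕ} {β : Fin n → Fin d → ℝ} {s : Finset (Fin n)} {D : Fin n → ℝ}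
    {Δ c κ : ℝ}
    (hD : ∀ (α : Fin d → ℝ) (τ : ℝ), |∑ j ∈ s.filter (fun j => τ ≤ β j ⬝ᵥ α), D j| ≤ Δ)
    (hκ : 1 ≤ κ) (hc0 : 1 / κ ≤ c) (hc : c < 1 / 2) (α : Fin d → ℝ) :
    |∑ j ∈ s, D j * hfun c (-(β j ⬝ᵥ α))| ≤ Real.log κ * Δ := by
  have hκ0 : 0 < κ := by linarith
  have hcp : 0 < c := lt_of_lt_of_le (by positivity) hc0
  exact abs_sum_monotone_le (φ := fun z => hfun c (-z)) (Real.log_nonneg hκ) hD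
    (fun z z' h => hfun_antitone hcp hc (neg_le_neg h)) (fun z => hfun_mem hκ0 hc0 hc _) α

/-! ### Assembly -/

/-- Sparse weights accurate on all halfspaces intersected with any of the `2 * m` index sets `σ e`,
both for counting and for the measure `p` with thresholds proportional to `p`. -/
lemma exists_halfspace_weights {n m k : ℕ} (hn : 1 ≤ n) (β : Fin n → Fin 2 → ℝ)
    (σ : Fin m × Bool → Finset (Fin n)) (p : Fin n → ℝ) (hp : ∀ j, 0 < p j)
    (hp1 : ∑ j, p j = 1) (hpn : ∀ j, 1 / (n : ℝ) ≤ 4 * p j) (δ : ℝ) (hδ : 0 < δ) (hδ1 : δ ≤ 1)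
    (hm : 1 ≤ m) (hk0 : 0 < k) (hk : Real.log (32 * m * n ^ 3) < k * (δ ^ 2 / 64)) :
    ∃ w : Fin n → ℝ, (∀ j, 0 ≤ w j) ∧ (Finset.univ.filter fun j => w j ≠ 0).card ≤ k ∧
      ∀ e (α : Fin 2 → ℝ) (t : ℝ),
        |∑ j ∈ (σ e).filter (fun j => t ≤ β j ⬝ᵥ α), (w j - 1)| ≤ δ * n ∧
        |∑ j ∈ (σ e).filter (fun j => t * p j ≤ β j ⬝ᵥ α), (w j - 1) * p j| ≤ δ := by
  set a₁ : Fin n → Fin 3 → ℝ := fun j => ![β j 0, β j 1, 1] with ha₁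
  set a₂ : Fin n → Fin 3 → ℝ := fun j => ![β j 0, β j 1, p j] with ha₂
  have hnR : (0 : ℝ) < n := by exact_mod_cast hn
  have hmR : (0 : ℝ) < m := by exact_mod_cast hm
  obtain ⟨w, hw0, hwk, hw⟩ := exists_weights (k := k)
    (ι := (Fin m × Bool) × (halfspaceTraces a₁ ⊕ halfspaceTraces a₂)) p hp hp1
    (fun e => σ e.1 ∩ Sum.elim Subtype.val Subtype.val e.2)
    (fun e => Sum.elim (fun _ _ => 1 / (n : ℝ)) (fun _ => p) e.2) 4 (by norm_num)
    (by
      rintro ⟨e, A | A⟩ j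
      · exact ⟨by simp only [Sum.elim_inl]; positivity, hpn j⟩
      · exact ⟨(hp j).le, by simp only [Sum.elim_inr]; linarith [hp j]⟩) δ hδ (by linarith) hk0
    (by
      refine lt_of_le_of_lt ?_ (hk.trans_eq (by norm_num))
      simp only [Fintype.card_prod, Fintype.card_sum, Fintype.card_coe, Fintype.card_fin,
        Fintype.card_bool]
      have h1 : ((halfspaceTraces a₁).card : ℝ) ≤ 4 * n ^ 3 := by
        exact_mod_cast card_halfspaceTraces_le hn a₁
      have h2 : ((halfspaceTraces a₂).card : ℝ) ≤ 4 * n ^ 3 := by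
        exact_mod_cast card_halfspaceTraces_le hn a₂
      have h3 : (0 : ℝ) < (halfspaceTraces a₁).card := by
        exact_mod_cast Finset.card_pos.2 ⟨_, mem_halfspaceTraces a₁ 0⟩
      push_cast
      refine Real.log_le_log (by positivity) ?_
      calc _ ≤ 2 * ((m : ℝ) * 2 * (4 * n ^ 3 + 4 * n ^ 3)) := by gcongr
        _ = _ := by ring)
  refine ⟨w, hw0, hwk, fun e α t => ⟨?_, ?_⟩⟩
  · have h := hw (e, Sum.inl ⟨_, mem_halfspaceTraces a₁ ![α 0, α 1, -t]⟩)
    have hset : (σ e) ∩ (univ.filter fun j => 0 ≤ a₁ j ⬝ᵥ ![α 0, α 1, -t])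
        = (σ e).filter (fun j => t ≤ β j ⬝ᵥ α) := by
      ext j
      simp [ha₁, dotProduct, Fin.sum_univ_succ]
      intro _
      constructor <;> intro h <;> linarith
    simp only [Sum.elim_inl] at h
    rw [hset, ← Finset.sum_mul, abs_mul, abs_of_pos (by positivity : 0 < 1 / (n : ℝ)),
      mul_one_div, div_le_iff₀ hnR] at h
    exact h
  · have h := hw (e, Sum.inr ⟨_, mem_halfspaceTraces a₂ ![α 0, α 1, -t]⟩)
    have hset : (σ e) ∩ (univ.filter fun j => 0 ≤ a₂ j ⬝ᵥ ![α 0, α 1, -t])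
        = (σ e).filter (fun j => t * p j ≤ β j ⬝ᵥ α) := by
      ext j
      simp [ha₂, dotProduct, Fin.sum_univ_succ]
      intro _
      constructor <;> intro h <;> linarith
    simp only [Sum.elim_inr] at h
    rw [hset] at h
    exact h

lemma exists_sample_size {n m : ℕ} (hn : 3 ≤ n) (hm : 3 ≤ m) {κ μ ε : ℝ} (hκ : 4 ≤ κ)
    (hμ : 1 ≤ μ) (hε : 0 < ε) (hε1 : ε < 1 / 4) :
    ∃ k : ℕ, 0 < k ∧
      Real.log (32 * m * n ^ 3) < k * ((ε / (48 * μ ^ 2 * (1 + Real.log κ))) ^ 2 / 64) ∧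
      (k : ℝ) ≤ 1024 * 2304 * (1 + Real.log κ) * κ * (μ ^ 4 * Real.sqrt n / ε ^ 3) *
        ((Real.log n) ^ 2 + Real.log m) := by
  have hlog3 : ∀ r : ℕ, 3 ≤ r → 1 ≤ Real.log r := by
    intro r hr
    have hr' : (3 : ℝ) ≤ r := by exact_mod_cast hr
    rw [Real.le_log_iff_exp_le (by linarith)]
    linarith [Real.exp_one_lt_d9]
  have hln := hlog3 n hn
  have hlm := hlog3 m hm
  have hnR : (3 : ℝ) ≤ n := by exact_mod_cast hn
  have hmR : (3 : ℝ) ≤ m := by exact_mod_cast hm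
  have hE0 : 0 ≤ Real.log κ := Real.log_nonneg (by linarith)
  have hEκ : 1 + Real.log κ ≤ κ := by linarith [Real.log_le_sub_one_of_pos (x := κ) (by linarith)]
  set E := Real.log κ
  set Λ := (Real.log n) ^ 2 + Real.log m with hΛ
  set δ := ε / (48 * μ ^ 2 * (1 + E)) with hδ
  have hδ0 : 0 < δ := by positivity
  have hΛ1 : 1 ≤ Λ := by nlinarith
  have hlog : Real.log (32 * m * n ^ 3) ≤ 8 * Λ := by
    rw [Real.log_mul (by positivity) (by positivity), Real.log_mul (by norm_num) (by positivity),
      Real.log_pow, show (32 : ℝ) = 2 ^ 5 by norm_num, Real.log_pow]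
    push_cast
    nlinarith [Real.log_two_lt_d9]
  set T := 8 * Λ * 64 / δ ^ 2 with hT
  have hTle : 2 * T ≤ 1024 * 2304 * (1 + E) * κ * (μ ^ 4 * Real.sqrt n / ε ^ 3) * Λ := by
    have e1 : 2 * T = 1024 * 2304 * (1 + E) * (1 + E) * (μ ^ 4 * 1 / ε ^ 2) * Λ := by
      rw [hT, hδ]; field_simp; ring
    rw [e1]
    have h1 : 1 ≤ Real.sqrt n := by
      rw [Real.one_le_sqrt]; linarith
    have h2 : ε ^ 3 ≤ ε ^ 2 := pow_le_pow_of_le_one hε.le (by linarith) (by norm_num)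
    gcongr
  have hT1 : 1 ≤ T := by
    have hδ1 : δ ≤ 1 := by
      rw [hδ, div_le_one (by positivity)]
      nlinarith [mul_nonneg (sq_nonneg μ) hE0]
    rw [hT, le_div_iff₀ (by positivity)]
    nlinarith [pow_le_one₀ hδ0.le hδ1 (n := 2)]
  refine ⟨⌊T⌋₊ + 1, Nat.succ_pos _, ?_, ?_⟩
  · have h1 : T < (⌊T⌋₊ : ℝ) + 1 := Nat.lt_floor_add_one T
    push_cast
    calc Real.log (32 * m * n ^ 3) ≤ 8 * Λ := hlog
      _ = T * (δ ^ 2 / 64) := by rw [hT]; field_simp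
      _ < _ := mul_lt_mul_of_pos_right h1 (by positivity)
  · have h1 : (⌊T⌋₊ : ℝ) ≤ T := Nat.floor_le (by linarith)
    push_cast
    linarith

/-- Coresets for the 3PL IRT model (item-parameter subproblems, with the guessing
parameter `c ∈ [1/κ, 1/2)` quantified): one nonnegative weight vector of small support
is a `(1+ε)`-coreset simultaneously for all `m` objectives `L_i(α,c)`. Here `E = ln κ`. -/
theorem stmt2 :
    ∃ C : ℝ, 0 < C ∧
      ∀ (n m : ℕ), 3 ≤ n → 3 ≤ m →
      ∀ κ : ℝ, 4 ≤ κ →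
      ∀ (β : Fin n → Fin 2 → ℝ) (Y : Fin m → Fin n → ℝ),
        (∀ i j, Y i j = 1 ∨ Y i j = -1) →
      ∀ μ ε : ℝ, 1 ≤ μ → 0 < ε → ε < 1 / 4 →
        (∀ i : Fin m,
          Mu1ComplexOn (fun j k => -Y i j * β j k)
            (Finset.univ.filter fun j => Y i j = -1) μ ∧
          Mu0ComplexOn (fun j k => -Y i j * β j k)
            (Finset.univ.filter fun j => Y i j = -1) μ ∧
          Mu1ComplexOn (fun j k => -Y i j * β j k)
            (Finset.univ.filter fun j => Y i j = 1) μ ∧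
          Mu0ComplexOn (fun j k => -Y i j * β j k)
            (Finset.univ.filter fun j => Y i j = 1) μ) →
        (∀ (i : Fin m) (η : Fin 2 → ℝ),
          ∑ j ∈ Finset.univ.filter (fun j => Y i j = -1),
              |(fun k => -Y i j * β j k) ⬝ᵥ η| ≤
            2 * μ * ∑ j ∈ Finset.univ.filter (fun j => Y i j = 1),
              |(fun k => -Y i j * β j k) ⬝ᵥ η|) →
        (∀ (i : Fin m) (η : Fin 2 → ℝ),
          ∑ j ∈ Finset.univ.filter (fun j => Y i j = 1),
              |(fun k => -Y i j * β j k) ⬝ᵥ η| ≤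
            2 * μ * ∑ j ∈ Finset.univ.filter (fun j => Y i j = -1),
              |(fun k => -Y i j * β j k) ⬝ᵥ η|) →
        ∃ w : Fin n → ℝ, (∀ j, 0 ≤ w j) ∧
          ((Finset.univ.filter fun j => w j ≠ 0).card : ℝ) ≤
            C * (1 + Real.log κ) * κ * (μ ^ 4 * Real.sqrt n / ε ^ 3) *
              ((Real.log n) ^ 2 + Real.log m) ∧
          ∀ (i : Fin m) (α : Fin 2 → ℝ) (c : ℝ), 1 / κ ≤ c → c < 1 / 2 →
            |(∑ j ∈ Finset.univ.filter (fun j => Y i j = -1),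
                  w j * gfun c ((fun k => -Y i j * β j k) ⬝ᵥ α)) +
                (∑ j ∈ Finset.univ.filter (fun j => Y i j = 1),
                  w j * hfun c ((fun k => -Y i j * β j k) ⬝ᵥ α)) -
                ((∑ j ∈ Finset.univ.filter (fun j => Y i j = -1),
                    gfun c ((fun k => -Y i j * β j k) ⬝ᵥ α)) +
                  ∑ j ∈ Finset.univ.filter (fun j => Y i j = 1),
                    hfun c ((fun k => -Y i j * β j k) ⬝ᵥ α))| ≤
              ε * ((∑ j ∈ Finset.univ.filter (fun j => Y i j = -1),
                  gfun c ((fun k => -Y i j * β j k) ⬝ᵥ α)) +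
                ∑ j ∈ Finset.univ.filter (fun j => Y i j = 1),
                  hfun c ((fun k => -Y i j * β j k) ⬝ᵥ α)) := by
  refine ⟨1024 * 2304, by norm_num, ?_⟩
  intro n m hn hm κ hκ β Y hY μ ε hμ hε hε1 hcomp hbal1 hbal2
  have hx : ∀ i j (η : Fin 2 → ℝ), (fun k => -Y i j * β j k) ⬝ᵥ η = -Y i j * (β j ⬝ᵥ η) := by
    intro i j η
    exact smul_dotProduct (-Y i j) (β j) η
  have hunion : ∀ i (f : Fin n → ℝ), ∑ j, f j = ∑ j ∈ univ.filter (fun j => Y i j = -1), f j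
      + ∑ j ∈ univ.filter (fun j => Y i j = 1), f j := by
    intro i f
    rw [← Finset.sum_filter_add_sum_filter_not univ (fun j => Y i j = -1)]
    congr 2
    ext j
    simp only [mem_filter, mem_univ, true_and]
    rcases hY i j with h | h <;> rw [h] <;> norm_num
  have hcard : ∀ i, (n : ℝ) = ((univ.filter fun j => Y i j = -1).card : ℝ)
      + ((univ.filter fun j => Y i j = 1).card : ℝ) := by
    intro i
    simpa using hunion i (fun _ => 1)
  have hnR : (3 : ℝ) ≤ n := by exact_mod_cast hn
  -- A vector orthogonal to all `β j` would contradict the ℓ₀ complexity of both row sets.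
  have hβ : ∀ η : Fin 2 → ℝ, η ≠ 0 → ∃ j, β j ⬝ᵥ η ≠ 0 := by
    intro η hη
    by_contra! hcon
    have i : Fin m := ⟨0, by omega⟩
    obtain ⟨-, h1, -, h2⟩ := hcomp i
    have h1 := h1 η hη
    have h2 := h2 η hη
    simp only [hx, hcon, mul_zero, le_refl, lt_irrefl, Finset.filter_true, Finset.filter_false,
      Finset.card_empty, Nat.cast_zero] at h1 h2
    linarith [hcard i]
  obtain ⟨p, hp, hp1, hpn, hpβ⟩ := exists_sampling_distribution (by omega) β hβ
  obtain ⟨k, hk0, hk, hkle⟩ := exists_sample_size hn hm hκ hμ hε hε1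
  have hE0 : 0 ≤ Real.log κ := Real.log_nonneg (by linarith)
  set E := Real.log κ
  set δ := ε / (48 * μ ^ 2 * (1 + E)) with hδ
  have hδ0 : 0 < δ := by positivity
  have hδ1 : δ ≤ 1 := by
    rw [hδ, div_le_one (by positivity)]
    nlinarith [mul_nonneg (sq_nonneg μ) hE0]
  obtain ⟨w, hw0, hwk, hw⟩ := exists_halfspace_weights (by omega) β
    (fun e : Fin m × Bool => univ.filter fun j => Y e.1 j = if e.2 then 1 else -1)
    p hp hp1 hpn δ hδ0 hδ1 (by omega) hk0 hk
  refine ⟨w, hw0, le_trans (by exact_mod_cast hwk) hkle, ?_⟩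
  intro i α c hc0 hc
  have hκ0 : 0 < κ := by linarith
  have hcp : 0 < c := lt_of_lt_of_le (by positivity) hc0
  obtain ⟨hg1, hg0, -, hh0⟩ := hcomp i
  have hneg := fun α t => hw (i, false) α t
  have hpos := fun α t => hw (i, true) α t
  simp only [if_true, Bool.false_eq_true, if_false] at hneg hpos
  set s' := univ.filter fun j => Y i j = -1 with hs'
  set s'' := univ.filter fun j => Y i j = 1 with hs''
  set N := ∑ j, |β j ⬝ᵥ α| with hN
  have hN0 : 0 ≤ N := Finset.sum_nonneg fun _ _ => abs_nonneg _
  have hxg : ∀ j ∈ s', (fun k => -Y i j * β j k) ⬝ᵥ α = β j ⬝ᵥ α := by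
    intro j hj
    rw [hx, (Finset.mem_filter.1 hj).2]; ring
  have hxh : ∀ j ∈ s'', (fun k => -Y i j * β j k) ⬝ᵥ α = -(β j ⬝ᵥ α) := by
    intro j hj
    rw [hx, (Finset.mem_filter.1 hj).2]; ring
  have lg0 := card_le_sum_gfun hμ hcp hc hg0 α
  have lh0 := card_le_sum_hfun hμ hκ0 hc0 hc hh0 α
  have lg1 := sum_abs_le_sum_gfun hμ hcp hc hg1 α
  set G := ∑ j ∈ s', gfun c ((fun k => -Y i j * β j k) ⬝ᵥ α) with hG
  set H := ∑ j ∈ s'', hfun c ((fun k => -Y i j * β j k) ⬝ᵥ α) with hH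
  have hG0 : 0 ≤ G :=
    Finset.sum_nonneg fun j _ => (le_max_right _ _).trans (max_le_gfun hcp hc _)
  have hH0 : 0 ≤ H := Finset.sum_nonneg fun j _ => (hfun_mem hκ0 hc0 hc _).1
  have hLn : (n : ℝ) ≤ 8 * μ * (G + H) := by
    have := hcard i
    nlinarith [mul_nonneg (sub_nonneg.2 hμ) (add_nonneg hG0 hH0)]
  have hLN : N ≤ 6 * μ ^ 2 * (G + H) := by
    have h1 : N = ∑ j ∈ s', |(fun k => -Y i j * β j k) ⬝ᵥ α|
        + ∑ j ∈ s'', |(fun k => -Y i j * β j k) ⬝ᵥ α| := by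
      rw [hN, hunion i]
      congr 1
      · exact Finset.sum_congr rfl fun j hj => by rw [hxg j hj]
      · exact Finset.sum_congr rfl fun j hj => by rw [hxh j hj, abs_neg]
    have h2 := hbal2 i α
    set P := ∑ j ∈ s', |(fun k => -Y i j * β j k) ⬝ᵥ α| with hP
    have hP0 : 0 ≤ P := Finset.sum_nonneg fun _ _ => abs_nonneg _
    calc N ≤ (1 + 2 * μ) * P := by rw [h1]; linarith
      _ ≤ (1 + 2 * μ) * ((1 + μ) * G) := by gcongr
      _ ≤ 3 * μ * (2 * μ * (G + H)) := by gcongr <;> linarith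
      _ = _ := by ring
  have hgerr := abs_sum_gfun_le (D := fun j => w j - 1) hp (fun α t => (hneg α t).1)
    (fun α t => (hneg α t).2) hcp hc α N hN0 (fun j => hpβ α j)
  have hherr := abs_sum_hfun_le (D := fun j => w j - 1) (fun α t => (hpos α t).1)
    (by linarith : 1 ≤ κ) hc0 hc α
  have hdiff : (∑ j ∈ s', w j * gfun c ((fun k => -Y i j * β j k) ⬝ᵥ α)) +
        (∑ j ∈ s'', w j * hfun c ((fun k => -Y i j * β j k) ⬝ᵥ α)) - (G + H)
      = ∑ j ∈ s', (w j - 1) * gfun c (β j ⬝ᵥ α) + ∑ j ∈ s'', (w j - 1) * hfun c (-(β j ⬝ᵥ α)) := by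
    rw [add_sub_add_comm, hG, hH, ← Finset.sum_sub_distrib, ← Finset.sum_sub_distrib]
    congr 1
    · exact Finset.sum_congr rfl fun j hj => by rw [hxg j hj]; ring
    · exact Finset.sum_congr rfl fun j hj => by rw [hxh j hj]; ring
  rw [hdiff]
  calc _ ≤ (4 * N * δ + 3 * (δ * n)) + E * (δ * n) :=
        (abs_add_le _ _).trans (add_le_add hgerr hherr)
    _ = δ * (4 * N + (3 + E) * n) := by ring
    _ ≤ δ * (4 * (6 * μ ^ 2 * (G + H)) + (3 + E) * (8 * μ * (G + H))) := by gcongr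
    _ = δ * ((24 * μ ^ 2 + (24 + 8 * E) * μ) * (G + H)) := by ring
    _ ≤ δ * ((48 * μ ^ 2 * (1 + E)) * (G + H)) := by
        gcongr
        nlinarith [mul_nonneg hE0 (sq_nonneg μ), mul_nonneg hE0 (by nlinarith : 0 ≤ μ ^ 2 - μ)]
    _ = ε * (G + H) := by rw [hδ]; field_simp
end

section
/- Let X ∈ ℝ^{n×d} with rows x_1,…,x_n be μ-complex in the ℓ₁ sense for some μ ≥ 1, and assume σ_min^{(1)}(X) := inf_{v ≠ 0} ‖Xv‖₁/‖v‖₁ > 0. Define the 2PL (logistic) loss f(Xη) = ∑_{i=1}^n ln(1+exp(x_i·η)). Let ε ∈ (0,1/2) and let η_opt, η_core ∈ ℝ^d satisfy f(X·η_core) ≤ (1+3ε)·f(X·η_opt). Then ‖η_opt − η_core‖₁ ≤ ((1+μ)·(2+3ε)/σ_min^{(1)}(X))·f(X·η_opt). -/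
/-! With `v = ηopt - ηcore`, the definition of `σ` gives `σ ‖v‖₁ ≤ ‖Xv‖₁ ≤ ‖X ηopt‖₁ + ‖X ηcore‖₁`
(`sInf_mul_sum_abs_le`). For every `η`, complexity bounds `‖Xη‖₁` by `1 + μ` times the `ℓ₁` norm of
its positive part, hence by `(1 + μ) f(Xη)` (`sum_abs_le_loss`). Since
`f(X ηcore) ≤ (1 + 3ε) f(X ηopt)`, the two terms add up to at most
`(1 + μ) (2 + 3ε) f(X ηopt)`. -/

open Finset Matrix

/-- The rows `x` are `μ`-complex in the ℓ₁ sense. -/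
def Mu1Complex {n d : ℕ} (x : Fin n → Fin d → ℝ) (μ : ℝ) : Prop :=
  ∀ η : Fin d → ℝ,
    ∑ i ∈ Finset.univ.filter (fun i => 0 ≤ x i ⬝ᵥ η), x i ⬝ᵥ η ≤
      μ * ∑ i ∈ Finset.univ.filter (fun i => x i ⬝ᵥ η < 0), |x i ⬝ᵥ η|

/-- The `ℓ₁` norm of `Xη` is its positive part plus its negative part. Complexity, applied at `-η`,
bounds the negative part by `μ` times the positive part, and `t⁺ ≤ log (1 + exp t)` bounds the
positive part by the logistic loss. -/
lemma sum_abs_le_loss {n d : ℕ} (X : Fin n → Fin d → ℝ) (μ : ℝ) (hμ : 1 ≤ μ)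
    (hcomplex : Mu1Complex X μ) (η : Fin d → ℝ) :
    ∑ i, |X i ⬝ᵥ η| ≤ (1 + μ) * ∑ i, Real.log (1 + Real.exp (X i ⬝ᵥ η)) := by
  have hneg : ∑ i, max (-(X i ⬝ᵥ η)) 0 ≤ μ * ∑ i, max (X i ⬝ᵥ η) 0 := by
    have h := hcomplex (-η)
    simp only [Finset.sum_filter, dotProduct_neg] at h
    convert h using 1
    · refine Finset.sum_congr rfl fun i _ => ?_
      split_ifs with h0
      · exact max_eq_left h0
      · exact max_eq_right (le_of_not_ge h0)
    · congr 1
      refine Finset.sum_congr rfl fun i _ => ?_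
      split_ifs with h0
      · rw [abs_neg, abs_of_pos (by linarith), max_eq_left (by linarith)]
      · exact max_eq_right (by linarith)
  have hpos : ∑ i, max (X i ⬝ᵥ η) 0 ≤ ∑ i, Real.log (1 + Real.exp (X i ⬝ᵥ η)) := by
    refine Finset.sum_le_sum fun i _ => max_le ?_ ?_
    · rw [Real.le_log_iff_exp_le (by positivity)]
      linarith
    · exact Real.log_nonneg (by linarith [Real.exp_pos (X i ⬝ᵥ η)])
  have habs : ∑ i, |X i ⬝ᵥ η| = ∑ i, max (X i ⬝ᵥ η) 0 + ∑ i, max (-(X i ⬝ᵥ η)) 0 := by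
    rw [← Finset.sum_add_distrib]
    refine Finset.sum_congr rfl fun i _ => ?_
    rcases le_total 0 (X i ⬝ᵥ η) with h | h
    · rw [abs_of_nonneg h, max_eq_left h, max_eq_right (by linarith), add_zero]
    · rw [abs_of_nonpos h, max_eq_right h, max_eq_left (by linarith), zero_add]
  calc ∑ i, |X i ⬝ᵥ η| ≤ (1 + μ) * ∑ i, max (X i ⬝ᵥ η) 0 := by linarith
    _ ≤ _ := mul_le_mul_of_nonneg_left hpos (by linarith)

lemma sInf_mul_sum_abs_le {n d : ℕ} (X : Fin n → Fin d → ℝ) (v : Fin d → ℝ) :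
    sInf ((fun v : Fin d → ℝ => (∑ i, |X i ⬝ᵥ v|) / ∑ k, |v k|) '' {v | v ≠ 0}) * ∑ k, |v k| ≤
      ∑ i, |X i ⬝ᵥ v| := by
  by_cases hv : v = 0
  · simp [hv]
  · obtain ⟨k, hk⟩ := Function.ne_iff.mp hv
    have hpos : 0 < ∑ k, |v k| :=
      Finset.sum_pos' (fun i _ => abs_nonneg _) ⟨k, Finset.mem_univ k, abs_pos.mpr hk⟩
    rw [← le_div_iff₀ hpos]
    refine csInf_le ⟨0, ?_⟩ ⟨v, hv, rfl⟩
    rintro _ ⟨w, -, rfl⟩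
    positivity

/-- Parameter recovery guarantee for the 2PL (logistic) loss: if `X` is `μ₁`-complex,
`σ = σ_min^{(1)}(X) > 0`, and the loss of `η_core` is within a `(1+3ε)` factor of
that of `η_opt`, then `‖η_opt - η_core‖₁ ≤ ((1+μ)(2+3ε)/σ)·f(X η_opt)`. -/
theorem stmt3 {n d : ℕ} (X : Fin n → Fin d → ℝ) (μ : ℝ) (hμ : 1 ≤ μ)
    (hcomplex : Mu1Complex X μ)
    (σ : ℝ)
    (hσ : σ = sInf ((fun v : Fin d → ℝ =>
      (∑ i, |X i ⬝ᵥ v|) / ∑ k, |v k|) '' {v | v ≠ 0}))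
    (hσpos : 0 < σ)
    (ε : ℝ) (hε0 : 0 < ε) (hε : ε < 1 / 2)
    (ηopt ηcore : Fin d → ℝ)
    (hcore : (∑ i, Real.log (1 + Real.exp (X i ⬝ᵥ ηcore))) ≤
      (1 + 3 * ε) * ∑ i, Real.log (1 + Real.exp (X i ⬝ᵥ ηopt))) :
    ∑ k, |ηopt k - ηcore k| ≤
      ((1 + μ) * (2 + 3 * ε) / σ) *
        ∑ i, Real.log (1 + Real.exp (X i ⬝ᵥ ηopt)) := by
  have h1 := sum_abs_le_loss X μ hμ hcomplex ηopt
  have h2 := sum_abs_le_loss X μ hμ hcomplex ηcore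
  have h3 := sInf_mul_sum_abs_le X (ηopt - ηcore)
  rw [← hσ] at h3
  have h4 : ∑ i, |X i ⬝ᵥ (ηopt - ηcore)| ≤ ∑ i, |X i ⬝ᵥ ηopt| + ∑ i, |X i ⬝ᵥ ηcore| := by
    rw [← Finset.sum_add_distrib]
    refine Finset.sum_le_sum fun i _ => ?_
    rw [dotProduct_sub]
    exact abs_sub _ _
  have h5 := mul_le_mul_of_nonneg_left hcore (by linarith : (0 : ℝ) ≤ 1 + μ)
  simp only [Pi.sub_apply] at h3
  rw [div_mul_eq_mul_div, le_div_iff₀ hσpos]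
  linarith
end

section
/- Let κ ≥ 4, μ ≥ 1, and 0 < ε ≤ μ²/4. Let x_1,…,x_n ∈ ℝ² and Y_1,…,Y_n ∈ {−1,1}; set n' = #{j : Y_j = −1} and assume n' ≥ 1, that n ≤ (1+2μ)·n', and that the matrix X' with rows {x_j : Y_j = −1} is μ-complex in the ℓ₁ sense. For c ∈ [0,1) and α ∈ ℝ², define f(Xα, c) = ∑_{j: Y_j = −1} g_c(x_j·α) + ∑_{j: Y_j = 1} h_c(x_j·α). Then for every c ∈ [1/κ, 1/2) and every α ∈ ℝ²: |f(Xα, c) − f(Xα, c + ε/μ²)| ≤ 6·κ·ε·f(Xα, c). -/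
/-!
Write `δ = ε/μ²`, and let `n'` be the number of indices labelled `-1`. Increasing `c` by `δ`
increases every `g`-term by at most `4δ` (`gfun_shift`) and decreases every `h`-term by at most
`κδ` (`hfun_shift`). The two effects have opposite signs, and there are at most `2μn'` terms of the
second kind, so the objective changes by at most `2μκδn' = 2κεn'/μ`.

It remains to see that `f(Xα, c) ≥ n'/(3μ)`. The `h`-terms are nonnegative, so only the logistic sum
matters. Pointwise, `ln(1+e^z) ≥ 1/(3μ) + z⁺/2 - z⁻/(2μ)` (`softplus_lower`), and `μ`-complexity at
`η = -α` says precisely that the correction terms `z⁺ - z⁻/μ` have a nonnegative sum.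
-/

open Finset Matrix

lemma log_sub_log_le {a b : ℝ} (ha : 0 < a) (hb : 0 < b) :
    Real.log a - Real.log b ≤ (a - b) / b := by
  rw [← Real.log_div ha.ne' hb.ne']
  have h := Real.log_le_sub_one_of_pos (div_pos ha hb)
  rwa [sub_div, div_self hb.ne']

lemma gfun_shift {c δ : ℝ} (hc : c < 1 / 2) (hδ0 : 0 ≤ δ) (hδ : δ ≤ 1 / 4) (z : ℝ) :
    0 ≤ gfun (c + δ) z - gfun c z ∧ gfun (c + δ) z - gfun c z ≤ 4 * δ := by
  have hpos : 0 < 1 - (c + δ) := by linarith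
  have hmono : Real.log (1 - (c + δ)) ≤ Real.log (1 - c) :=
    Real.log_le_log hpos (by linarith)
  have hup := log_sub_log_le (a := 1 - c) (by linarith) hpos
  have hdiv : (1 - c - (1 - (c + δ))) / (1 - (c + δ)) ≤ 4 * δ := by
    rw [div_le_iff₀ hpos]
    nlinarith
  unfold gfun
  constructor <;> linarith

lemma hfun_shift {κ c δ : ℝ} (hκ : 0 < κ) (hc0 : 1 / κ ≤ c) (hc1 : c < 1) (hδ0 : 0 ≤ δ)
    (z : ℝ) :
    0 ≤ hfun c z - hfun (c + δ) z ∧ hfun c z - hfun (c + δ) z ≤ κ * δ := by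
  have hcpos : 0 < c := lt_of_lt_of_le (by positivity) hc0
  have hp0 : 0 < 1 / (1 + Real.exp (-z)) := by positivity
  have hp1 : 1 / (1 + Real.exp (-z)) ≤ 1 := by
    rw [div_le_one (by positivity)]
    linarith [Real.exp_pos (-z)]
  unfold hfun
  rw [div_eq_mul_one_div (1 - c), div_eq_mul_one_div (1 - (c + δ))]
  set p := 1 / (1 + Real.exp (-z))
  have hcp : c ≤ c + (1 - c) * p := by nlinarith
  have hbase : 0 < c + (1 - c) * p := by linarith
  have hle : c + (1 - c) * p ≤ c + δ + (1 - (c + δ)) * p := by nlinarith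
  have hmono := Real.log_le_log hbase hle
  have hup := log_sub_log_le (hbase.trans_le hle) hbase
  have hdiv : (c + δ + (1 - (c + δ)) * p - (c + (1 - c) * p)) / (c + (1 - c) * p) ≤ κ * δ := by
    rw [div_le_iff₀ hbase]
    have hκc : 1 ≤ κ * (c + (1 - c) * p) := by
      rw [div_le_iff₀ hκ] at hc0
      nlinarith
    nlinarith
  constructor <;> linarith

lemma hfun_nonneg {c : ℝ} (hc0 : 0 < c) (hc1 : c < 1) (z : ℝ) : 0 ≤ hfun c z := by
  have hp0 : 0 < 1 / (1 + Real.exp (-z)) := by positivity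
  have hp1 : 1 / (1 + Real.exp (-z)) ≤ 1 := by
    rw [div_le_one (by positivity)]
    linarith [Real.exp_pos (-z)]
  unfold hfun
  rw [div_eq_mul_one_div]
  have := Real.log_nonpos (x := c + (1 - c) * (1 / (1 + Real.exp (-z))))
    (by nlinarith) (by nlinarith)
  linarith

/-- The tangent bound at `0`, which follows from `1 + e^z ≥ 2 e^{z/2}`, with the constant `ln 2`
weakened to `1/3`. -/
lemma softplus_tangent (z : ℝ) : z / 2 + 1 / 3 ≤ Real.log (1 + Real.exp z) := by
  have hsq : Real.exp z = Real.exp (z / 2) ^ 2 := by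
    rw [← Real.exp_nat_mul]
    congr 1
    push_cast
    ring
  have h : 2 * Real.exp (z / 2) ≤ 1 + Real.exp z := by
    rw [hsq]
    nlinarith [sq_nonneg (Real.exp (z / 2) - 1)]
  have hlog := Real.log_le_log (by positivity) h
  rw [Real.log_mul (by norm_num) (Real.exp_pos _).ne', Real.log_exp] at hlog
  linarith [Real.log_two_gt_d9]

/-- A piecewise linear minorant of `ln(1+e^z)` whose slopes `1/2` and `1/(2μ)` are in the ratio
that `μ`-complexity balances. The two conditionals are the positive and negative parts of `z`,
written as the terms of the sums defining complexity at `-α`. -/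
lemma softplus_lower {μ : ℝ} (hμ : 1 ≤ μ) (z : ℝ) :
    1 / (3 * μ) + 1 / (2 * μ) * (μ * (if -z < 0 then |-z| else 0) - (if 0 ≤ -z then -z else 0)) ≤
      Real.log (1 + Real.exp z) := by
  have hμ0 : 0 < μ := by linarith
  have htan := softplus_tangent z
  have hs : 1 / (3 * μ) = 1 / (2 * μ) * (2 / 3) := by
    field_simp
  have hs0 : 0 < 1 / (2 * μ) := by positivity
  have hs1 : 1 / (2 * μ) ≤ 1 / 2 := one_div_le_one_div_of_le (by norm_num) (by linarith)
  have hsμ : 1 / (2 * μ) * μ = 1 / 2 := by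
    field_simp
  rw [hs]
  set s := 1 / (2 * μ)
  rcases lt_or_ge 0 z with hz | hz
  · rw [if_pos (by linarith), if_neg (by linarith), abs_neg, abs_of_pos hz]
    have : s * (μ * z - 0) = z / 2 := by
      rw [sub_zero, ← mul_assoc, hsμ]
      ring
    linarith
  · rw [if_neg (by linarith), if_pos (by linarith)]
    rcases le_total (-(2 / 3)) z with hz' | hz'
    · nlinarith
    · -- Here the minorant is nonpositive, while `ln(1+e^z) ≥ 0`.
      have := Real.log_nonneg (x := 1 + Real.exp z) (by linarith [Real.exp_pos z])
      nlinarith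

/-- Lower bound for the logistic sum of a `μ`-complex matrix. The constant `1/3` is all that is
needed, so the additional `ln μ` gain is not tracked. -/
lemma logistic_sum_lower {N d : ℕ} {x : Fin N → Fin d → ℝ} {s : Finset (Fin N)} {μ : ℝ}
    (hμ : 1 ≤ μ) (h : Mu1ComplexOn x s μ) (α : Fin d → ℝ) :
    (s.card : ℝ) * (1 / (3 * μ)) ≤ ∑ j ∈ s, Real.log (1 + Real.exp (x j ⬝ᵥ α)) := by
  have hη := h (-α)
  simp only [dotProduct_neg] at hη
  rw [Finset.sum_filter, Finset.sum_filter] at hη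
  have hsum := Finset.sum_le_sum fun j (_ : j ∈ s) => softplus_lower hμ (x j ⬝ᵥ α)
  rw [Finset.sum_add_distrib, Finset.sum_const, nsmul_eq_mul, ← Finset.mul_sum,
    Finset.sum_sub_distrib, ← Finset.mul_sum] at hsum
  have hs : 0 < 1 / (2 * μ) := by positivity
  have := mul_nonneg hs.le (sub_nonneg.2 hη)
  linarith

/-- Perturbing the guessing parameter `c ∈ [1/κ, 1/2)` by an additive `ε/μ²` changes
the 3PL item objective `f(Xα, c)` by at most a multiplicative factor `1 + 6κε`. -/
theorem stmt19 (κ μ ε : ℝ) (hκ : 4 ≤ κ) (hμ : 1 ≤ μ) (hε0 : 0 < ε)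
    (hε : ε ≤ μ ^ 2 / 4)
    {n : ℕ} (x : Fin n → Fin 2 → ℝ) (Y : Fin n → ℝ) (hY : ∀ j, Y j = 1 ∨ Y j = -1)
    (hn' : 1 ≤ (Finset.univ.filter fun j => Y j = -1).card)
    (hn : (n : ℝ) ≤ (1 + 2 * μ) * ((Finset.univ.filter fun j => Y j = -1).card : ℝ))
    (hcomplex : Mu1ComplexOn x (Finset.univ.filter fun j => Y j = -1) μ) :
    ∀ c : ℝ, 1 / κ ≤ c → c < 1 / 2 → ∀ α : Fin 2 → ℝ,
      |((∑ j ∈ Finset.univ.filter (fun j => Y j = -1), gfun c (x j ⬝ᵥ α)) +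
            ∑ j ∈ Finset.univ.filter (fun j => Y j = 1), hfun c (x j ⬝ᵥ α)) -
          ((∑ j ∈ Finset.univ.filter (fun j => Y j = -1),
              gfun (c + ε / μ ^ 2) (x j ⬝ᵥ α)) +
            ∑ j ∈ Finset.univ.filter (fun j => Y j = 1),
              hfun (c + ε / μ ^ 2) (x j ⬝ᵥ α))| ≤
        6 * κ * ε *
          ((∑ j ∈ Finset.univ.filter (fun j => Y j = -1), gfun c (x j ⬝ᵥ α)) +
            ∑ j ∈ Finset.univ.filter (fun j => Y j = 1), hfun c (x j ⬝ᵥ α)) := by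
  intro c hc0 hc1 α
  have hμ0 : 0 < μ := by linarith
  have hκ0 : 0 < κ := by linarith
  have hcpos : 0 < c := lt_of_lt_of_le (by positivity) hc0
  have hδ0 : 0 ≤ ε / μ ^ 2 := by positivity
  have hδ : ε / μ ^ 2 ≤ 1 / 4 := by
    rw [div_le_iff₀ (by positivity)]
    linarith
  have hεδ : ε = μ ^ 2 * (ε / μ ^ 2) := by
    field_simp
  have hcard : (n : ℝ) = ((Finset.univ.filter fun j => Y j = -1).card : ℝ) +
      ((Finset.univ.filter fun j => Y j = 1).card : ℝ) := by
    have hsplit := Finset.card_filter_add_card_filter_not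
      (s := (Finset.univ : Finset (Fin n))) (fun j => Y j = -1)
    have hcompl : (Finset.univ.filter fun j => ¬ Y j = -1) =
        Finset.univ.filter fun j => Y j = 1 := by
      ext j
      rcases hY j with h | h <;> simp [h] <;> norm_num
    rw [hcompl, Finset.card_univ, Fintype.card_fin] at hsplit
    exact_mod_cast hsplit.symm
  have hlog := logistic_sum_lower hμ hcomplex α
  set S := Finset.univ.filter fun j => Y j = -1
  set T := Finset.univ.filter fun j => Y j = 1
  set δ := ε / μ ^ 2
  clear_value δ
  have hg0 := Finset.sum_nonneg fun j (_ : j ∈ S) => (gfun_shift hc1 hδ0 hδ (x j ⬝ᵥ α)).1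
  have hg1 := Finset.sum_le_sum fun j (_ : j ∈ S) => (gfun_shift hc1 hδ0 hδ (x j ⬝ᵥ α)).2
  have hh0 := Finset.sum_nonneg fun j (_ : j ∈ T) =>
    (hfun_shift hκ0 hc0 (by linarith) hδ0 (x j ⬝ᵥ α)).1
  have hh1 := Finset.sum_le_sum fun j (_ : j ∈ T) =>
    (hfun_shift hκ0 hc0 (by linarith) hδ0 (x j ⬝ᵥ α)).2
  rw [Finset.sum_sub_distrib] at hg0 hg1 hh0 hh1
  rw [Finset.sum_const, nsmul_eq_mul] at hg1 hh1
  have hgl : ∑ j ∈ S, Real.log (1 + Real.exp (x j ⬝ᵥ α)) ≤ ∑ j ∈ S, gfun c (x j ⬝ᵥ α) := by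
    refine Finset.sum_le_sum fun j _ => ?_
    have := Real.log_nonpos (x := 1 - c) (by linarith) (by linarith)
    unfold gfun
    linarith
  have hhn : 0 ≤ ∑ j ∈ T, hfun c (x j ⬝ᵥ α) :=
    Finset.sum_nonneg fun j _ => hfun_nonneg hcpos (by linarith) _
  have hS0 : (0 : ℝ) ≤ S.card := Nat.cast_nonneg _
  have hT : (T.card : ℝ) ≤ 2 * μ * S.card := by linarith
  have hbound : 2 * μ * κ * δ * S.card ≤ 6 * κ * ε *
      ((∑ j ∈ S, gfun c (x j ⬝ᵥ α)) + ∑ j ∈ T, hfun c (x j ⬝ᵥ α)) := by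
    have hf := mul_le_mul_of_nonneg_left ((hlog.trans hgl).trans (le_add_of_nonneg_right hhn))
      (show 0 ≤ 6 * κ * ε by positivity)
    refine le_trans (le_of_eq ?_) hf
    rw [hεδ]
    field_simp
    ring
  have hgS : (S.card : ℝ) * (4 * δ) ≤ 2 * μ * κ * δ * S.card := by
    have h4 : 4 ≤ 2 * μ * κ := by nlinarith
    have := mul_le_mul_of_nonneg_right h4 (mul_nonneg hδ0 hS0)
    linarith
  have hhT : (T.card : ℝ) * (κ * δ) ≤ 2 * μ * κ * δ * S.card := by
    have := mul_le_mul_of_nonneg_right hT (mul_nonneg hκ0.le hδ0)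
    linarith
  -- The two increments have opposite signs, so each side of the absolute value sees only one.
  rw [abs_le]
  constructor <;> linarith
end
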